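/- Let (π, U) be a covariant representation of (A, G, α) on H with G finite. If (π, U) is irreducible (i.e. (π(A) ∪ U_G)' = ℂ·1), then the conjugation action of G on π(A)' is ergodic and dim π(A)' ≤ |G|. -/

import Mathlib

/-!
The sum of a `G`-orbit of the commutant is fixed by `G`, hence a scalar `τ x`, and
`⟪x, y⟫ = τ (x* y)` is an inner product on the commutant. If `e₁, …, eₙ` are orthonormal, the matrix
`A = (g · eᵢ)` with rows indexed by `G` satisfies `Aᴴ A = 1`. Thus `A Aᴴ` is a projection, its
diagonal entries `g · ∑ eᵢ eᵢ*` are at most `1`, and summing over `g` gives `∑ ‖eᵢ*‖² ≤ |G|`. If the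
span of the `eᵢ` is closed under adjoints, the coefficients `C` of the adjoint in this basis satisfy
`∑ⱼ conj Cᵢⱼ Cⱼᵢ = 1` for each `i` because the adjoint is an involution, so Cauchy–Schwarz gives
`n ≤ ∑ |Cᵢⱼ|² = ∑ ‖eᵢ*‖²`.
-/

open scoped InnerProductSpace Matrix

section HilbertSchmidt

variable {𝕜 E : Type*} [RCLike 𝕜] [NormedAddCommGroup E] [InnerProductSpace 𝕜 E]
  {σ : 𝕜 →+* 𝕜} [RingHomIsometric σ]

theorem one_le_sum_norm_inner_mul_norm_inner {ι : Type*} [Fintype ι] (b : OrthonormalBasis ι 𝕜 E)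
    {S : E →ₛₗ[σ] E} (hS : Function.Involutive S) (i : ι) :
    1 ≤ ∑ j, ‖⟪b j, S (b i)⟫_𝕜‖ * ‖⟪b i, S (b j)⟫_𝕜‖ := by
  have expansion : ∑ j, σ ⟪b j, S (b i)⟫_𝕜 * ⟪b i, S (b j)⟫_𝕜 = 1 := by
    calc ∑ j, σ ⟪b j, S (b i)⟫_𝕜 * ⟪b i, S (b j)⟫_𝕜
        = ⟪b i, S (∑ j, ⟪b j, S (b i)⟫_𝕜 • b j)⟫_𝕜 := by
          simp only [map_sum, map_smulₛₗ, inner_sum, inner_smul_right]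
      _ = 1 := by rw [b.sum_repr', hS, b.inner_eq_one]
  calc (1 : ℝ) = ‖∑ j, σ ⟪b j, S (b i)⟫_𝕜 * ⟪b i, S (b j)⟫_𝕜‖ := by rw [expansion, norm_one]
    _ ≤ ∑ j, ‖σ ⟪b j, S (b i)⟫_𝕜 * ⟪b i, S (b j)⟫_𝕜‖ := norm_sum_le _ _
    _ = ∑ j, ‖⟪b j, S (b i)⟫_𝕜‖ * ‖⟪b i, S (b j)⟫_𝕜‖ := by
        simp only [norm_mul, RingHomIsometric.norm_map]

theorem card_le_sum_norm_sq_of_involutive {ι : Type*} [Fintype ι] (b : OrthonormalBasis ι 𝕜 E)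
    {S : E →ₛₗ[σ] E} (hS : Function.Involutive S) :
    (Fintype.card ι : ℝ) ≤ ∑ i, ‖S (b i)‖ ^ 2 := by
  let c (i j : ι) : ℝ := ‖⟪b j, S (b i)⟫_𝕜‖
  have transpose : ∑ i, ∑ j, c j i ^ 2 = ∑ i, ∑ j, c i j ^ 2 := Finset.sum_comm
  calc (Fintype.card ι : ℝ) = ∑ _i : ι, 1 := by simp
    _ ≤ ∑ i, ∑ j, c i j * c j i :=
        Finset.sum_le_sum fun i _ => one_le_sum_norm_inner_mul_norm_inner b hS i
    _ ≤ ∑ i, ∑ j, (c i j ^ 2 + c j i ^ 2) / 2 := by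
        gcongr with i _ j _
        linarith [two_mul_le_add_sq (c i j) (c j i)]
    _ = ∑ i, ∑ j, c i j ^ 2 := by
        simp only [← Finset.sum_div, Finset.sum_add_distrib, transpose, add_self_div_two]
    _ = ∑ i, ‖S (b i)‖ ^ 2 := Finset.sum_congr rfl fun i _ => b.sum_sq_norm_inner_right _

theorem finrank_le_of_forall_orthonormal_sum_norm_sq_le {S : E →ₛₗ[σ] E}
    (hS : Function.Involutive S) {n : ℕ}
    (h : ∀ (k : ℕ) (e : Fin k → E), Orthonormal 𝕜 e → ∑ i, ‖S (e i)‖ ^ 2 ≤ n)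
    (V : Submodule 𝕜 E) [FiniteDimensional 𝕜 V] (hV : ∀ x ∈ V, S x ∈ V) :
    Module.finrank 𝕜 V ≤ n := by
  let b := stdOrthonormalBasis 𝕜 V
  have hSV : Function.Involutive (S.restrict hV) := fun x => Subtype.ext (hS x)
  have lower := card_le_sum_norm_sq_of_involutive b hSV
  have upper := h _ (fun i => (b i : E)) (b.orthonormal.comp_linearIsometry V.subtypeₗᵢ)
  rw [Fintype.card_fin] at lower
  exact_mod_cast lower.trans upper

theorem rank_le_of_forall_orthonormal_sum_norm_sq_le [RingHomSurjective σ] {S : E →ₛₗ[σ] E}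
    (hS : Function.Involutive S) {n : ℕ}
    (h : ∀ (k : ℕ) (e : Fin k → E), Orthonormal 𝕜 e → ∑ i, ‖S (e i)‖ ^ 2 ≤ n) :
    Module.rank 𝕜 E ≤ n := by
  refine rank_le fun s hs => ?_
  let W : Submodule 𝕜 E := Submodule.span 𝕜 s
  let V := W ⊔ W.map S
  have hV : ∀ x ∈ V, S x ∈ V := by
    intro x hx
    obtain ⟨y, hy, _, ⟨z, hz, rfl⟩, rfl⟩ := Submodule.mem_sup.mp hx
    rw [map_add, hS, add_comm]
    exact Submodule.add_mem_sup hz (Submodule.mem_map_of_mem hy)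
  calc s.card = Module.finrank 𝕜 W := (finrank_span_finset_eq_card hs).symm
    _ ≤ Module.finrank 𝕜 V := Submodule.finrank_mono le_sup_left
    _ ≤ n := finrank_le_of_forall_orthonormal_sum_norm_sq_le hS h V hV

end HilbertSchmidt

section StarOrderedRing

variable {B : Type*} [Ring B] [StarRing B] [PartialOrder B] [StarOrderedRing B]

theorem le_one_of_mul_self_le_self {p : B} (hp : IsSelfAdjoint p) (hpp : p * p ≤ p) : p ≤ 1 := by
  have decomposition : 1 - p = star (1 - p) * (1 - p) + (p - p * p) := by
    rw [star_sub, star_one, hp.star_eq]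
    noncomm_ring
  rw [← sub_nonneg, decomposition]
  exact add_nonneg (star_mul_self_nonneg _) (sub_nonneg.mpr hpp)

theorem mul_conjTranspose_diag_le_one {m n : Type*} [Fintype m] [Fintype n] [DecidableEq n]
    {A : Matrix m n B} (hA : Aᴴ * A = 1) (i : m) : (A * Aᴴ) i i ≤ 1 := by
  set P := A * Aᴴ with hP
  have hP_star : Pᴴ = P := Matrix.isHermitian_mul_conjTranspose_self A
  have hP_mul : P * P = P := by
    rw [hP, Matrix.mul_assoc, ← Matrix.mul_assoc Aᴴ, hA, Matrix.one_mul]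
  have star_entry (j k : m) : star (P j k) = P k j := congrFun₂ hP_star k j
  refine le_one_of_mul_self_le_self (star_entry i i) ?_
  calc P i i * P i i ≤ ∑ k, P i k * P k i := by
        refine Finset.single_le_sum (f := fun k => P i k * P k i) (fun k _ => ?_)
          (Finset.mem_univ i)
        rw [← star_entry i k]
        exact mul_star_self_nonneg _
    _ = P i i := congrFun₂ hP_mul i i

theorem re_nonneg_of_smul_one_nonneg {𝕜 : Type*} [RCLike 𝕜] [Algebra 𝕜 B] [StarModule 𝕜 B]
    [Nontrivial B] {c : 𝕜} (hc : (0 : B) ≤ c • 1) : 0 ≤ RCLike.re c := by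
  have c_real : (RCLike.re c : 𝕜) = c := by
    have h := (IsSelfAdjoint.of_nonneg hc).star_eq
    rw [star_smul, star_one] at h
    exact RCLike.conj_eq_iff_re.mp (smul_left_injective 𝕜 one_ne_zero h)
  by_contra! hneg
  have neg_nonneg : (0 : B) ≤ (-c) • 1 := by
    let r : 𝕜 := (√(-RCLike.re c) : ℝ)
    have r_sq : star r * r = -c := by
      rw [RCLike.star_def, RCLike.conj_ofReal, ← RCLike.ofReal_mul,
        Real.mul_self_sqrt (by linarith), RCLike.ofReal_neg, c_real]
    have h := star_mul_self_nonneg (r • (1 : B))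
    rwa [star_smul, star_one, smul_mul_smul_comm, one_mul, r_sq] at h
  have smul_eq_zero : c • (1 : B) = 0 :=
    le_antisymm (by rwa [neg_smul, Left.nonneg_neg_iff] at neg_nonneg) hc
  have c_eq_zero : c = 0 := (smul_eq_zero_iff_left one_ne_zero).mp smul_eq_zero
  simp [c_eq_zero] at hneg

end StarOrderedRing

/-- A group action by `*`-endomorphisms (necessarily `*`-automorphisms) of a unital `*`-algebra is
ergodic if its only fixed points are the scalars. -/
def IsErgodicAction {𝕜 B G : Type*} [CommSemiring 𝕜] [Semiring B] [Star B] [Algebra 𝕜 B] [Group G]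
    (φ : G →* (B →⋆ₐ[𝕜] B)) : Prop :=
  ∀ x, (∀ g, φ g x = x) → ∃ c : 𝕜, x = c • (1 : B)

namespace IsErgodicAction

section Trace

variable {𝕜 B G : Type*} [Field 𝕜] [Ring B] [Star B] [Algebra 𝕜 B] [Group G] [Fintype G]
  {φ : G →* (B →⋆ₐ[𝕜] B)}

theorem sum_mem_span_one (hφ : IsErgodicAction φ) (x : B) :
    (∑ g, (φ g : B →ₗ[𝕜] B)) x ∈ Submodule.span 𝕜 {(1 : B)} := by
  obtain ⟨c, hc⟩ := hφ (∑ g, φ g x) fun h => by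
    rw [map_sum]
    exact Fintype.sum_equiv (Equiv.mulLeft h) _ _ fun g =>
      (DFunLike.congr_fun (map_mul φ h g) x).symm
  exact Submodule.mem_span_singleton.mpr ⟨c, by simp [hc]⟩

variable [Nontrivial B] (hφ : IsErgodicAction φ)

/-- The functional `τ` with `∑ g, φ g x = τ x • 1`, which is `|G|` times the invariant state of an
ergodic action. -/
noncomputable def trace : B →ₗ[𝕜] 𝕜 :=
  (LinearEquiv.coord 𝕜 B 1 one_ne_zero).toLinearMap ∘ₗ
    (∑ g, (φ g : B →ₗ[𝕜] B)).codRestrict (Submodule.span 𝕜 {1}) hφ.sum_mem_span_one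

theorem trace_smul_one (x : B) : hφ.trace x • (1 : B) = ∑ g, φ g x := by
  rw [trace, LinearMap.comp_apply, LinearEquiv.coe_coe, LinearEquiv.coord_apply_smul]
  simp

theorem trace_eq_iff {x : B} {c : 𝕜} : hφ.trace x = c ↔ ∑ g, φ g x = c • (1 : B) := by
  rw [← hφ.trace_smul_one, (smul_left_injective 𝕜 one_ne_zero).eq_iff]

end Trace

theorem trace_star {𝕜 B G : Type*} [Field 𝕜] [StarRing 𝕜] [Ring B] [Nontrivial B] [StarRing B]
    [Algebra 𝕜 B] [StarModule 𝕜 B] [Group G] [Fintype G] {φ : G →* (B →⋆ₐ[𝕜] B)}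
    (hφ : IsErgodicAction φ) (x : B) : hφ.trace (star x) = star (hφ.trace x) := by
  rw [hφ.trace_eq_iff]
  simp_rw [map_star]
  rw [← star_sum, ← hφ.trace_smul_one, star_smul, star_one]

theorem star_mul_self_eq_zero_of_trace_eq_zero {𝕜 B G : Type*} [Field 𝕜] [Ring B]
    [Nontrivial B] [StarRing B] [PartialOrder B] [StarOrderedRing B] [Algebra 𝕜 B] [Group G]
    [Fintype G] {φ : G →* (B →⋆ₐ[𝕜] B)} (hφ : IsErgodicAction φ) {x : B}
    (hx : hφ.trace (star x * x) = 0) : star x * x = 0 := by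
  rw [hφ.trace_eq_iff, zero_smul, Finset.sum_eq_zero_iff_of_nonneg] at hx
  · rw [← hx 1 (Finset.mem_univ 1)]
    exact (DFunLike.congr_fun (map_one φ) _).symm
  · intro g _
    rw [map_mul, map_star]
    exact star_mul_self_nonneg _

section Positive

variable {𝕜 B G : Type*} [RCLike 𝕜] [Ring B] [Nontrivial B] [StarRing B] [PartialOrder B]
  [StarOrderedRing B] [Algebra 𝕜 B] [StarModule 𝕜 B] [Group G] [Fintype G]
  {φ : G →* (B →⋆ₐ[𝕜] B)} (hφ : IsErgodicAction φ)

theorem re_trace_star_mul_self_nonneg (x : B) : 0 ≤ RCLike.re (hφ.trace (star x * x)) := by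
  refine re_nonneg_of_smul_one_nonneg (B := B) ?_
  rw [hφ.trace_smul_one]
  refine Finset.sum_nonneg fun g _ => ?_
  rw [map_mul, map_star]
  exact star_mul_self_nonneg _

/-- The inner product `⟪x, y⟫ = τ (x* y)` of an ergodic action. -/
@[reducible]
noncomputable def innerProductCore (proper : ∀ x : B, star x * x = 0 → x = 0) :
    InnerProductSpace.Core 𝕜 B where
  inner x y := hφ.trace (star x * y)
  conj_inner_symm x y := by
    rw [← RCLike.star_def, ← hφ.trace_star, star_mul, star_star]
  re_inner_nonneg := hφ.re_trace_star_mul_self_nonneg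
  add_left x y z := by rw [star_add, add_mul, map_add]
  smul_left x y r := by rw [star_smul, smul_mul_assoc, map_smul, smul_eq_mul, RCLike.star_def]
  definite x hx := proper x (hφ.star_mul_self_eq_zero_of_trace_eq_zero hx)

theorem sum_re_trace_mul_star_le_card {ι : Type*} [Fintype ι] [DecidableEq ι] {e : ι → B}
    (he : ∀ i j, hφ.trace (star (e i) * e j) = if i = j then 1 else 0) :
    ∑ i, RCLike.re (hφ.trace (e i * star (e i))) ≤ Fintype.card G := by
  let A : Matrix G ι B := Matrix.of fun g i => φ g (e i)
  have columns_orthonormal : Aᴴ * A = 1 := by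
    ext i j
    calc (Aᴴ * A) i j = ∑ g, φ g (star (e i) * e j) := by
          simp [A, Matrix.mul_apply, map_star]
      _ = (1 : Matrix ι ι B) i j := by
          rw [← hφ.trace_smul_one, he, Matrix.one_apply, ite_smul, one_smul, zero_smul]
  have diag_sum : ∑ g, (A * Aᴴ) g g = (∑ i, hφ.trace (e i * star (e i))) • (1 : B) := by
    simp only [Finset.sum_smul, hφ.trace_smul_one, Matrix.mul_apply, Matrix.conjTranspose_apply, A,
      Matrix.of_apply, map_mul, map_star]
    exact Finset.sum_comm
  have diag_sum_le : (0 : B) ≤ (Fintype.card G - ∑ i, hφ.trace (e i * star (e i)) : 𝕜) • 1 := by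
    rw [sub_smul, ← diag_sum, sub_nonneg]
    calc ∑ g, (A * Aᴴ) g g ≤ ∑ _g : G, (1 : B) :=
          Finset.sum_le_sum fun g _ => mul_conjTranspose_diag_le_one columns_orthonormal g
      _ = (Fintype.card G : 𝕜) • (1 : B) := by simp [Nat.cast_smul_eq_nsmul]
  have h := re_nonneg_of_smul_one_nonneg diag_sum_le
  rwa [map_sub, map_sum, RCLike.natCast_re, sub_nonneg] at h

end Positive

theorem rank_le_card_of_proper {𝕜 B G : Type*} [RCLike 𝕜] [Ring B] [StarRing B] [PartialOrder B]
    [StarOrderedRing B] [Algebra 𝕜 B] [StarModule 𝕜 B] [Group G] [Fintype G]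
    {φ : G →* (B →⋆ₐ[𝕜] B)} (hφ : IsErgodicAction φ)
    (proper : ∀ x : B, star x * x = 0 → x = 0) : Module.rank 𝕜 B ≤ Fintype.card G := by
  nontriviality B
  let core := hφ.innerProductCore proper
  let : NormedAddCommGroup B := core.toNormedAddCommGroup
  let : InnerProductSpace 𝕜 B := .ofCore core.toCore
  refine rank_le_of_forall_orthonormal_sum_norm_sq_le (S := (starLinearEquiv 𝕜).toLinearMap)
    star_involutive fun k e he => ?_
  have h := hφ.sum_re_trace_mul_star_le_card (orthonormal_iff_ite.mp he)
  refine le_of_eq_of_le (Finset.sum_congr rfl fun i _ => ?_) h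
  rw [norm_sq_eq_re_inner (𝕜 := 𝕜)]
  change RCLike.re (hφ.trace (star (star (e i)) * star (e i))) = _
  rw [star_star]

theorem rank_le_card {B G : Type*} [CStarAlgebra B] [Group G] [Fintype G]
    {φ : G →* (B →⋆ₐ[ℂ] B)} (hφ : IsErgodicAction φ) : Module.rank ℂ B ≤ Fintype.card G := by
  let := CStarAlgebra.spectralOrder B
  have := CStarAlgebra.spectralOrderedRing B
  exact hφ.rank_le_card_of_proper fun x => CStarRing.star_mul_self_eq_zero_iff x |>.mp

end IsErgodicAction

section Commutant

/-- The action of a group by unitary conjugation on an invariant `*`-subalgebra. -/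
def conjAction {𝕜 D G : Type*} [CommSemiring 𝕜] [StarRing 𝕜] [Ring D] [StarRing D] [Algebra 𝕜 D]
    [StarModule 𝕜 D] [Group G] (U : G →* unitary D) (M : StarSubalgebra 𝕜 D)
    (hM : ∀ g, ∀ x ∈ M, (U g : D) * x * star (U g : D) ∈ M) : G →* (M →⋆ₐ[𝕜] M) where
  toFun g := StarAlgHom.codRestrict
    ((Unitary.conjStarAlgAut 𝕜 D (U g) : D →⋆ₐ[𝕜] D).comp M.subtype) M fun x => hM g x x.2
  map_one' := StarAlgHom.ext fun x => Subtype.ext <| by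
    change (U 1 : D) * x * star (U 1 : D) = x
    simp
  map_mul' g h := StarAlgHom.ext fun x => Subtype.ext <| by
    change (U (g * h) : D) * x * star (U (g * h) : D) =
      U g * (U h * x * star (U h : D)) * star (U g : D)
    simp [mul_assoc]

theorem conj_mem_centralizer {R : Type*} [Ring R] [StarRing R] {u : unitary R} {S : Set R}
    (hu : ∀ s ∈ S, star (u : R) * s * u ∈ S) {T : R} (hT : T ∈ S.centralizer) :
    (u : R) * T * star (u : R) ∈ S.centralizer := by
  intro s hs
  have commute_conj : Commute (star (u : R) * s * u) T := hT _ (hu s hs)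
  have h := commute_conj.map (Unitary.conjStarAlgAut ℤ R u)
  rwa [← Unitary.conjStarAlgAut_star_apply (S := ℤ), ← Unitary.conjStarAlgAut_mul_apply,
    Unitary.mul_star_self, map_one] at h

end Commutant

theorem irreducible_covariant_rep_commutant_small_general
    {D G : Type*} [CStarAlgebra D] [Group G] [Finite G] (U : G →* unitary D) (S : Set D)
    (hstar : ∀ s ∈ S, star s ∈ S) (hconj : ∀ g, ∀ s ∈ S, (U g : D) * s * star (U g : D) ∈ S)
    (hirr : ∀ T : D, T ∈ Set.centralizer (S ∪ Set.range fun g => (U g : D)) →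
      ∃ c : ℂ, T = c • (1 : D)) :
    (∀ T : D, T ∈ S.centralizer → (∀ g, (U g : D) * T * star (U g : D) = T) →
      ∃ c : ℂ, T = c • (1 : D)) ∧
    FiniteDimensional ℂ (Subalgebra.centralizer ℂ S) ∧
    Module.finrank ℂ (Subalgebra.centralizer ℂ S) ≤ Nat.card G := by
  have fixed_points (T : D) (hT : T ∈ S.centralizer)
      (hfix : ∀ g, (U g : D) * T * star (U g : D) = T) : ∃ c : ℂ, T = c • (1 : D) := by
    refine hirr T ?_
    rw [Set.centralizer_union]
    refine ⟨hT, Set.forall_mem_range.mpr fun g => ?_⟩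
    exact (commute_unitary_iff_star_right_conjugate (U g).2).mpr (hfix g)
  refine ⟨fixed_points, ?_⟩
  have := Fintype.ofFinite G
  let M : StarSubalgebra ℂ D :=
    { Subalgebra.centralizer ℂ S with
      star_mem' := Set.star_mem_centralizer' hstar }
  have : IsClosed (M : Set D) := Set.isClosed_centralizer S
  have invariant (g : G) (T : D) (hT : T ∈ M) : (U g : D) * T * star (U g : D) ∈ M :=
    conj_mem_centralizer (fun s hs => by simpa [← Unitary.star_eq_inv] using hconj g⁻¹ s hs) hT
  have ergodic : IsErgodicAction (conjAction U M invariant) := fun T hT =>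
    (fixed_points T T.2 fun g => congrArg Subtype.val (hT g)).imp fun c hc => Subtype.ext hc
  have rank_le : Module.rank ℂ M ≤ Nat.card G := by
    rw [Nat.card_eq_fintype_card]
    exact ergodic.rank_le_card
  exact ⟨Module.rank_lt_aleph0_iff.mp (rank_le.trans_lt Cardinal.natCast_lt_aleph0),
    Module.finrank_le_of_rank_le rank_le⟩

/-- If a covariant representation `(π, U)` of `(A, G, α)` with `G` finite is
irreducible, then the conjugation action of `G` on the commutant `π(A)'` is ergodic and
`dim π(A)' ≤ |G|`. -/
theorem irreducible_covariant_rep_commutant_small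
    (A : Type*) [NormedRing A] [StarRing A] [CStarRing A] [NormedAlgebra ℂ A]
    [CompleteSpace A] [StarModule ℂ A]
    (H : Type*) [NormedAddCommGroup H] [InnerProductSpace ℂ H] [CompleteSpace H]
    (G : Type*) [Group G] [Finite G]
    (α : G → A ≃⋆ₐ[ℂ] A) (hα : ∀ (g h : G) (x : A), α (g * h) x = α g (α h x))
    (π : A →⋆ₐ[ℂ] (H →L[ℂ] H)) (U : G →* unitary (H →L[ℂ] H))
    (hcov : ∀ (g : G) (x : A),
      π (α g x) = (U g : H →L[ℂ] H) * π x * star (U g : H →L[ℂ] H))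
    (hirr : ∀ T : H →L[ℂ] H,
      T ∈ Set.centralizer (Set.range (⇑π) ∪ Set.range (fun g => (U g : H →L[ℂ] H))) →
      ∃ c : ℂ, T = c • (1 : H →L[ℂ] H)) :
    (∀ T : H →L[ℂ] H, T ∈ Set.centralizer (Set.range (⇑π)) →
      (∀ g : G, (U g : H →L[ℂ] H) * T * star (U g : H →L[ℂ] H) = T) →
      ∃ c : ℂ, T = c • (1 : H →L[ℂ] H)) ∧
    FiniteDimensional ℂ (Subalgebra.centralizer ℂ (Set.range (⇑π))) ∧
    Module.finrank ℂ (Subalgebra.centralizer ℂ (Set.range (⇑π))) ≤ Nat.card G :=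
  irreducible_covariant_rep_commutant_small_general U (Set.range π)
    (Set.forall_mem_range.mpr fun x => ⟨star x, map_star π x⟩)
    (fun g => Set.forall_mem_range.mpr fun x => ⟨α g x, hcov g x⟩) hirr
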